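/- Let n, N ∈ ℕ, let f be a real polynomial in n variables, and let S = ⋃_{u=1}^{N} {x ∈ ℝⁿ : P_{i,u}(x) > 0 for all i, and Q_{k,u}(x) = 0 for all k} for real polynomials P_{i,u}, Q_{k,u} in n variables. Assume that the image f(S) = {f(x) : x ∈ S} is nonempty and bounded. Then there exist w ∈ ℕ and, for each j = 1, …, w, finite families of univariate real polynomials p^{(j)} = (p_{1,j}, …, p_{v_j,j}) and q^{(j)} = (q_{1,j}, …, q_{k_j,j}) such that, setting Q = ⋃_{j=1}^{w} {t ∈ ℝ : p_{i,j}(t) ≥ 0 for all i, and q_{k,j}(t) = 0 for all k}, the following hold: (1) Q equals the closure of f(S); (2) each p_{i,j} is squarefree and, for each j, any two distinct polynomials among p_{1,j}, …, p_{v_j,j} have no common complex root; and (3) f⋆ := inf{f(x) : x ∈ S} is the least element of Q, i.e., f⋆ ∈ Q and f⋆ ≤ t for every t ∈ Q (so inf_{x ∈ S} f(x) = min_{t ∈ Q} t). -/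

import Mathlib

open Polynomial

/-- A real univariate polynomial has only simple (complex) roots: it is nonzero and
every complex root has multiplicity at most one. -/
def HasOnlySimpleComplexRoots (p : Polynomial ℝ) : Prop :=
  p ≠ 0 ∧ ∀ a : ℂ, (p.map (algebraMap ℝ ℂ)).rootMultiplicity a ≤ 1

/-- Two real univariate polynomials have a common complex root. -/
def HasCommonComplexRoot (p q : Polynomial ℝ) : Prop :=
  ∃ a : ℂ, Polynomial.aeval a p = 0 ∧ Polynomial.aeval a q = 0


namespace TSeid

open Polynomial SignType

lemma sign_const (p : ℝ[X]) (a b : ℝ) (h : ∀ t ∈ Set.uIcc a b, p.eval t ≠ 0) :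
    sign (p.eval a) = sign (p.eval b) := by
  have hc : ContinuousOn (fun t => p.eval t) (Set.uIcc a b) := p.continuous.continuousOn
  have h0 : (0:ℝ) ∉ Set.uIcc (p.eval a) (p.eval b) := by
    intro h0
    obtain ⟨t, ht, h1⟩ := intermediate_value_uIcc hc h0
    exact h t ht h1
  rw [Set.mem_uIcc] at h0
  have ha := h a Set.left_mem_uIcc
  have hb := h b Set.right_mem_uIcc
  push Not at h0
  rcases lt_or_gt_of_ne ha with ha | ha <;> rcases lt_or_gt_of_ne hb with hb | hb
  · rw [sign_neg ha, sign_neg hb]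
  · linarith [h0.1 ha.le]
  · linarith [h0.2 hb.le]
  · rw [sign_pos ha, sign_pos hb]

lemma mono_le (p : ℝ[X]) (a b : ℝ) (hab : a ≤ b)
    (h : ∀ t ∈ Set.Icc a b, 0 ≤ p.derivative.eval t) : p.eval a ≤ p.eval b := by
  have : MonotoneOn (fun t => p.eval t) (Set.Icc a b) := by
    apply monotoneOn_of_deriv_nonneg (convex_Icc a b) p.continuous.continuousOn
      p.differentiable.differentiableOn
    intro x hx
    rw [Polynomial.deriv]
    exact h x (interior_subset hx)
  exact this (Set.left_mem_Icc.2 hab) (Set.right_mem_Icc.2 hab) hab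

lemma mono_lt (p : ℝ[X]) (a b : ℝ) (hab : a < b)
    (h : ∀ t ∈ Set.Ioo a b, 0 < p.derivative.eval t) : p.eval a < p.eval b := by
  have : StrictMonoOn (fun t => p.eval t) (Set.Icc a b) := by
    apply strictMonoOn_of_deriv_pos (convex_Icc a b) p.continuous.continuousOn
    intro x hx
    rw [Polynomial.deriv]
    rw [interior_Icc] at hx
    exact h x hx
  exact this (Set.left_mem_Icc.2 hab.le) (Set.right_mem_Icc.2 hab.le) hab

lemma sign_mono {x y : ℝ} (h : x ≤ y) : sign x ≤ sign y := SignType.sign.monotone h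

lemma mono_sign (p : ℝ[X]) (a b : ℝ) (hab : a ≤ b)
    (h : ∀ t ∈ Set.Icc a b, 0 ≤ p.derivative.eval t) : sign (p.eval a) ≤ sign (p.eval b) :=
  sign_mono (mono_le p a b hab h)

lemma anti_sign (p : ℝ[X]) (a b : ℝ) (hab : a ≤ b)
    (h : ∀ t ∈ Set.Icc a b, p.derivative.eval t ≤ 0) : sign (p.eval b) ≤ sign (p.eval a) := by
  apply sign_mono
  have := mono_le (-p) a b hab (by intro t ht; simpa using h t ht)
  simpa using this

lemma first_right (Z : Set ℝ) (hZ : Z.Finite) (y z : ℝ) (hz : z ∈ Z) (hyz : y < z) :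
    ∃ b ∈ Z, y < b ∧ ∀ c ∈ Z, y < c → b ≤ c := by
  have hf : (Z ∩ Set.Ioi y).Finite := hZ.inter_of_left _
  obtain ⟨b, hb, hmin⟩ := Set.exists_min_image _ id hf ⟨z, hz, hyz⟩
  exact ⟨b, hb.1, hb.2, fun c hc hyc => hmin c ⟨hc, hyc⟩⟩

lemma deriv_pos_on (p : ℝ[X]) (Z : Set ℝ) (y b : ℝ)
    (hZ : ∀ z, p.derivative.eval z = 0 → z ∈ Z) (hd : 0 < p.derivative.eval y)
    (hb : ∀ t, y < t → t < b → t ∉ Z) : ∀ t ∈ Set.Ioo y b, 0 < p.derivative.eval t := by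
  intro t ht
  have := sign_const p.derivative y t (by
    intro u hu h0
    rw [Set.uIcc_of_le ht.1.le] at hu
    rcases hu.1.eq_or_lt with rfl | h
    · exact hd.ne' h0
    · exact hb u h (hu.2.trans_lt ht.2) (hZ u h0))
  rw [sign_pos hd] at this
  exact sign_eq_one_iff.1 this.symm

structure GapHyp (p p' : ℝ[X]) (Z Z' : Set ℝ) (R : ℝ → ℝ → Prop) (y y0 : ℝ) : Prop where
  fin : Z.Finite
  fin' : Z'.Finite
  dz : ∀ z, p.derivative.eval z = 0 → z ∈ Z
  dz' : ∀ z, p'.derivative.eval z = 0 → z ∈ Z'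
  tot : ∀ z ∈ Z, ∃ z' ∈ Z', R z z'
  tot' : ∀ z' ∈ Z', ∃ z ∈ Z, R z z'
  ord : ∀ z z' w w', R z z' → R w w' → z < w → z' < w' ∨ (R z w' ∧ R w z')
  sgn : ∀ z ∈ Z, ∀ z', R z z' → sign (p.eval z) = sign (p'.eval z')
  rel : R y y0
  ny : y ∉ Z
  ny0 : y0 ∉ Z'
  nR : ∀ z', R y z' → z' ∉ Z'

lemma gap_right {p p' : ℝ[X]} {Z Z' : Set ℝ} {R : ℝ → ℝ → Prop} {y y0 : ℝ}
    (H : GapHyp p p' Z Z' R y y0)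
    (hd : 0 < p.derivative.eval y) (hd' : 0 < p'.derivative.eval y0)
    (hs : sign (p'.eval y0) < sign (p.eval y)) :
    ∃ y', (∀ t ∈ Set.uIcc y0 y', t ∉ Z') ∧ sign (p'.eval y') = sign (p.eval y) := by
  have key : ∃ T, y0 < T ∧ 0 < p'.eval T ∧ ∀ t, y0 < t → t < T → t ∉ Z' := by
    by_cases hex : ∃ z ∈ Z', y0 < z
    · obtain ⟨z, hz, hyz⟩ := hex
      obtain ⟨b', hb', hyb', hmin'⟩ := first_right Z' H.fin' y0 z hz hyz
      refine ⟨b', hyb', ?_, fun t h1 h2 h3 => absurd (hmin' t h3 h1) (not_le.2 h2)⟩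
      obtain ⟨b0, hb0, hR0⟩ := H.tot' b' hb'
      have hyb0 : y < b0 := by
        rcases lt_trichotomy y b0 with h | h | h
        · exact h
        · exact absurd (h ▸ hb0) H.ny
        · rcases H.ord _ _ _ _ hR0 H.rel h with h | h
          · exact absurd h (not_lt.2 hyb'.le)
          · exact absurd hb' (H.nR _ h.2)
      obtain ⟨b, hb, hyb, hmin⟩ := first_right Z H.fin y b0 hb0 hyb0
      obtain ⟨b1, hb1, hR1⟩ := H.tot b hb
      have hyb1 : y0 < b1 := by
        rcases H.ord _ _ _ _ H.rel hR1 hyb with h | h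
        · exact h
        · exact absurd hb1 (H.nR _ h.1)
      have hRb : R b b' := by
        rcases (hmin b0 hb0 hyb0).eq_or_lt with h | h
        · rw [h]; exact hR0
        · rcases H.ord _ _ _ _ hR1 hR0 h with h | h
          · exact absurd h (not_lt.2 (hmin' _ hb1 hyb1))
          · exact h.1
      have hlt := mono_lt p y b hyb (deriv_pos_on p Z y b H.dz hd
        (fun t h1 h2 h3 => absurd (hmin t h3 h1) (not_le.2 h2)))
      have hnn : 0 ≤ p.eval y := by
        by_contra hneg
        push Not at hneg
        rw [sign_neg hneg] at hs
        exact absurd hs (by generalize sign (p'.eval y0) = a; revert a; decide)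
      have h1 := H.sgn b hb b' hRb
      rw [sign_pos (hnn.trans_lt hlt)] at h1
      exact sign_eq_one_iff.1 h1.symm
    · push Not at hex
      have hno : ∀ t, y0 < t → t ∉ Z' := fun t h1 h2 => absurd (hex t h2) (not_le.2 h1)
      have hmono : ∀ T, y0 < T → p'.eval y0 < p'.eval T := fun T hT =>
        mono_lt p' y0 T hT (deriv_pos_on p' Z' y0 T H.dz' hd' (fun t h1 _ => hno t h1))
      have hdeg : 0 < p'.degree := by
        by_contra hdeg
        push Not at hdeg
        rw [Polynomial.eq_C_of_degree_le_zero hdeg] at hd'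
        simp at hd'
      have hlc : 0 ≤ p'.leadingCoeff := by
        by_contra hlc
        push Not at hlc
        have ht := p'.tendsto_atBot_of_leadingCoeff_nonpos hdeg hlc.le
        obtain ⟨T, h1, h2⟩ := ((ht.eventually (Filter.eventually_lt_atBot (p'.eval y0))).and
          (Filter.eventually_gt_atTop y0)).exists
        exact absurd (hmono T h2) (not_lt.2 h1.le)
      have ht := p'.tendsto_atTop_of_leadingCoeff_nonneg hdeg hlc
      obtain ⟨T, h1, h2⟩ := ((ht.eventually (Filter.eventually_gt_atTop 0)).and
          (Filter.eventually_gt_atTop y0)).exists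
      exact ⟨T, h2, h1, fun t h _ => hno t h⟩
  obtain ⟨T, hT, hpT, hno⟩ := key
  have hivt : ∀ v, p'.eval y0 < v → v < p'.eval T → ∃ t ∈ Set.Ioo y0 T, p'.eval t = v := by
    intro v h1 h2
    obtain ⟨t, ht, h⟩ := intermediate_value_Ioo hT.le
      (f := fun t => p'.eval t) p'.continuous.continuousOn ⟨h1, h2⟩
    exact ⟨t, ht, h⟩
  have hfin : ∃ v, p'.eval y0 < v ∧ v < p'.eval T ∧ sign v = sign (p.eval y) := by
    rcases lt_trichotomy (p.eval y) 0 with h | h | h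
    · rw [sign_neg h] at hs
      exact absurd hs (by generalize sign (p'.eval y0) = a; revert a; decide)
    · refine ⟨0, ?_, hpT, by rw [h]⟩
      by_contra hneg
      push Not at hneg
      have := sign_mono hneg
      rw [h] at hs
      exact absurd hs (not_lt.2 this)
    · have h0 : p'.eval y0 ≤ 0 := by
        by_contra hneg
        push Not at hneg
        rw [sign_pos hneg, sign_pos h] at hs
        exact lt_irrefl _ hs
      exact ⟨p'.eval T / 2, by linarith, by linarith, by
        rw [sign_pos h, sign_pos (by linarith)]⟩
  obtain ⟨v, h1, h2, h3⟩ := hfin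
  obtain ⟨t, ht, htv⟩ := hivt v h1 h2
  refine ⟨t, ?_, by rw [htv, h3]⟩
  intro u hu
  rw [Set.uIcc_of_le ht.1.le] at hu
  rcases hu.1.eq_or_lt with rfl | h
  · exact H.ny0
  · exact hno u h (hu.2.trans_lt ht.2)

lemma neg_mem_uIcc {a b t : ℝ} (h : t ∈ Set.uIcc a b) : -t ∈ Set.uIcc (-a) (-b) := by
  rw [Set.mem_uIcc] at *
  rcases h with h | h
  · right; constructor <;> linarith [h.1, h.2]
  · left; constructor <;> linarith [h.1, h.2]

lemma GapHyp.neg {p p' : ℝ[X]} {Z Z' : Set ℝ} {R : ℝ → ℝ → Prop} {y y0 : ℝ}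
    (H : GapHyp p p' Z Z' R y y0) : GapHyp (-p) (-p') Z Z' R y y0 where
  fin := H.fin
  fin' := H.fin'
  dz := fun z hz => H.dz z (by simpa using hz)
  dz' := fun z hz => H.dz' z (by simpa using hz)
  tot := H.tot
  tot' := H.tot'
  ord := H.ord
  sgn := fun z hz z' h => by
    simp only [eval_neg, Left.sign_neg, H.sgn z hz z' h]
  rel := H.rel
  ny := H.ny
  ny0 := H.ny0
  nR := H.nR

lemma GapHyp.refl {p p' : ℝ[X]} {Z Z' : Set ℝ} {R : ℝ → ℝ → Prop} {y y0 : ℝ}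
    (H : GapHyp p p' Z Z' R y y0) :
    GapHyp (p.comp (-X)) (p'.comp (-X)) {z | -z ∈ Z} {z | -z ∈ Z'}
      (fun a b => R (-a) (-b)) (-y) (-y0) where
  fin := H.fin.preimage (neg_injective.injOn)
  fin' := H.fin'.preimage (neg_injective.injOn)
  dz := fun z hz => H.dz (-z) (by simpa [derivative_comp] using hz)
  dz' := fun z hz => H.dz' (-z) (by simpa [derivative_comp] using hz)
  tot := fun z hz => by
    obtain ⟨z', h1, h2⟩ := H.tot _ hz
    exact ⟨-z', by simpa using h1, by simpa using h2⟩
  tot' := fun z hz => by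
    obtain ⟨z', h1, h2⟩ := H.tot' _ hz
    exact ⟨-z', by simpa using h1, by simpa using h2⟩
  ord := fun z z' w w' h1 h2 h3 => by
    rcases H.ord _ _ _ _ h2 h1 (neg_lt_neg h3) with h | h
    · left; exact neg_lt_neg_iff.1 h
    · right; exact ⟨h.2, h.1⟩
  sgn := fun z hz z' h => by
    simpa using H.sgn _ hz _ h
  rel := by simpa using H.rel
  ny := by simpa using H.ny
  ny0 := by simpa using H.ny0
  nR := fun z' h => H.nR _ (by simpa using h)

lemma neg_lt_sign {a b : SignType} (h : a < b) : -b < -a := by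
  revert a b; decide

lemma gap_pos {p p' : ℝ[X]} {Z Z' : Set ℝ} {R : ℝ → ℝ → Prop} {y y0 : ℝ}
    (H : GapHyp p p' Z Z' R y y0)
    (hd : 0 < p.derivative.eval y) (hd' : 0 < p'.derivative.eval y0) :
    ∃ y', (∀ t ∈ Set.uIcc y0 y', t ∉ Z') ∧ sign (p'.eval y') = sign (p.eval y) := by
  rcases lt_trichotomy (sign (p'.eval y0)) (sign (p.eval y)) with h | h | h
  · exact gap_right H hd hd' h
  · refine ⟨y0, ?_, h⟩
    intro t ht
    rw [Set.uIcc_self, Set.mem_singleton_iff] at ht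
    rw [ht]; exact H.ny0
  · obtain ⟨y', h1, h2⟩ := gap_right H.refl.neg (by simpa [derivative_comp] using hd)
      (by simpa [derivative_comp] using hd') (by
        simpa [Left.sign_neg] using neg_lt_sign h)
    refine ⟨-y', ?_, ?_⟩
    · intro t ht
      have := h1 (-t) (by simpa using neg_mem_uIcc ht)
      simpa using this
    · simpa [Left.sign_neg] using h2

lemma gap {p p' : ℝ[X]} {Z Z' : Set ℝ} {R : ℝ → ℝ → Prop} {y y0 : ℝ}
    (H : GapHyp p p' Z Z' R y y0)
    (hd : sign (p.derivative.eval y) = sign (p'.derivative.eval y0)) :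
    ∃ y', (∀ t ∈ Set.uIcc y0 y', t ∉ Z') ∧ sign (p'.eval y') = sign (p.eval y) := by
  rcases lt_trichotomy (p.derivative.eval y) 0 with h | h | h
  · rw [sign_neg h] at hd
    have h' := sign_eq_neg_one_iff.1 hd.symm
    obtain ⟨y', h1, h2⟩ := gap_pos H.neg (by simpa using h) (by simpa using h')
    exact ⟨y', h1, by simpa [Left.sign_neg] using h2⟩
  · exact absurd (H.dz y h) H.ny
  · rw [sign_pos h] at hd
    exact gap_pos H h (sign_eq_one_iff.1 hd.symm)


structure Good {I : Type*} (s : Finset I) (d : I → ℕ) (P P' : I → ℝ[X]) : Prop where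
  deg : ∀ i ∈ s, (P i).natDegree = d i
  deg' : ∀ i ∈ s, (P' i).natDegree = d i
  der : ∀ i ∈ s, d i ≠ 0 → ∃ j ∈ s, P j = derivative (P i) ∧ P' j = derivative (P' i)
  const : ∀ i ∈ s, d i = 0 → ∀ y y', sign ((P i).eval y) = sign ((P' i).eval y')
  rem : ∀ i ∈ s, ∀ j ∈ s, d j ≠ 0 → d j ≤ d i → ∀ y y', (P j).eval y = 0 → (P' j).eval y' = 0 →
    (∀ k ∈ s, d k < d j → sign ((P k).eval y) = sign ((P' k).eval y')) →
    sign ((P i).eval y) = sign ((P' i).eval y')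

lemma Good.symm {I : Type*} {s : Finset I} {d : I → ℕ} {P P' : I → ℝ[X]} (H : Good s d P P') :
    Good s d P' P where
  deg := H.deg'
  deg' := H.deg
  der := fun i hi h => by
    obtain ⟨j, hj, h1, h2⟩ := H.der i hi h
    exact ⟨j, hj, h2, h1⟩
  const := fun i hi h y y' => (H.const i hi h y' y).symm
  rem := fun i hi j hj h1 h2 y y' h3 h4 h5 =>
    (H.rem i hi j hj h1 h2 y' y h4 h3 (fun k hk hkd => (h5 k hk hkd).symm)).symm

lemma Good.der_lt {I : Type*} {s : Finset I} {d : I → ℕ} {P P' : I → ℝ[X]} (H : Good s d P P')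
    {i j : I} (hi : i ∈ s) (hj : j ∈ s) (h : d i ≠ 0) (hij : P j = derivative (P i)) :
    d j < d i := by
  rw [← H.deg i hi, ← H.deg j hj, hij]
  exact natDegree_derivative_lt (by rw [H.deg i hi]; exact h)

lemma const_eval {p : ℝ[X]} (h : p.natDegree = 0) (a b : ℝ) : p.eval a = p.eval b := by
  rw [eq_C_of_natDegree_eq_zero h]; simp

/-- Lemma of Thom. -/
lemma Good.thom {I : Type*} {s : Finset I} {d : I → ℕ} {P P' : I → ℝ[X]} (H : Good s d P P')
    (n : ℕ) : ∀ i ∈ s, d i ≤ n → ∀ y w, y ≤ w →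
      (∀ k ∈ s, d k ≤ d i → sign ((P k).eval y) = sign ((P k).eval w)) →
      ∀ t ∈ Set.Icc y w, sign ((P i).eval t) = sign ((P i).eval y) := by
  induction n with
  | zero =>
    intro i hi hd y w _ _ t _
    rw [const_eval (by rw [H.deg i hi]; omega) t y]
  | succ n ih =>
    intro i hi hd y w hyw hk t ht
    by_cases h0 : d i = 0
    · rw [const_eval (by rw [H.deg i hi]; exact h0) t y]
    obtain ⟨j, hj, h1, -⟩ := H.der i hi h0
    have hlt := H.der_lt hi hj h0 h1
    have hjc := ih j hj (by omega) y w hyw (fun k hk' hd' => hk k hk' (by omega))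
    have hends := hk i hi le_rfl
    rw [h1] at hjc
    rcases le_total 0 ((derivative (P i)).eval y) with hs | hs
    · have hnn : ∀ u ∈ Set.Icc y w, 0 ≤ (derivative (P i)).eval u := fun u hu => by
        have := hjc u hu
        exact sign_nonneg_iff.1 (this ▸ sign_nonneg_iff.2 hs)
      have a1 := mono_sign (P i) y t ht.1 (fun u hu => hnn u ⟨hu.1, hu.2.trans ht.2⟩)
      have a2 := mono_sign (P i) t w ht.2 (fun u hu => hnn u ⟨ht.1.trans hu.1, hu.2⟩)
      exact le_antisymm (hends ▸ a2) a1
    · have hnn : ∀ u ∈ Set.Icc y w, (derivative (P i)).eval u ≤ 0 := fun u hu => by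
        have := hjc u hu
        exact sign_nonpos_iff.1 (this ▸ sign_nonpos_iff.2 hs)
      have a1 := anti_sign (P i) y t ht.1 (fun u hu => hnn u ⟨hu.1, hu.2.trans ht.2⟩)
      have a2 := anti_sign (P i) t w ht.2 (fun u hu => hnn u ⟨ht.1.trans hu.1, hu.2⟩)
      exact le_antisymm a1 (hends ▸ a2)

lemma Good.order {I : Type*} {s : Finset I} {d : I → ℕ} {P P' : I → ℝ[X]} (H : Good s d P P')
    {y y' w w' : ℝ} (hy : ∀ i ∈ s, sign ((P i).eval y) = sign ((P' i).eval y'))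
    (hw : ∀ i ∈ s, sign ((P i).eval w) = sign ((P' i).eval w')) (hyw : y < w)
    (hne : ∃ i ∈ s, sign ((P i).eval y) ≠ sign ((P i).eval w)) : y' < w' := by
  classical
  have hfne : (s.filter (fun i => sign ((P i).eval y) ≠ sign ((P i).eval w))).Nonempty := by
    obtain ⟨i, hi, h⟩ := hne
    exact ⟨i, Finset.mem_filter.2 ⟨hi, h⟩⟩
  obtain ⟨i, hi, hmin⟩ := Finset.exists_min_image _ d hfne
  obtain ⟨hi, hid⟩ := Finset.mem_filter.1 hi
  have hlow : ∀ k ∈ s, d k < d i → sign ((P k).eval y) = sign ((P k).eval w) := by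
    intro k hk hkd
    by_contra hc
    exact absurd (hmin k (Finset.mem_filter.2 ⟨hk, hc⟩)) (not_le.2 hkd)
  have h0 : d i ≠ 0 := by
    intro h0
    exact hid (by rw [const_eval (by rw [H.deg i hi]; exact h0) y w])
  obtain ⟨j, hj, h1, h1'⟩ := H.der i hi h0
  have hlt := H.der_lt hi hj h0 h1
  have hc := H.thom (d j) j hj le_rfl y w hyw.le (fun k hk hkd => hlow k hk (by omega))
  by_contra hcon
  push Not at hcon
  have hc' := H.symm.thom (d j) j hj le_rfl w' y' hcon (fun k hk hkd => by
    rw [← hy k hk, ← hw k hk]; exact (hlow k hk (by omega)).symm)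
  have hjw : sign ((P' j).eval w') = sign ((P j).eval y) := by
    rw [← hw j hj]; exact (hlow j hj hlt).symm
  rw [hjw] at hc'
  rw [h1'] at hc'
  rw [h1] at hc hc'
  rcases le_total 0 ((derivative (P i)).eval y) with hs | hs
  · have a1 := mono_sign (P i) y w hyw.le (fun u hu =>
      sign_nonneg_iff.1 (hc u hu ▸ sign_nonneg_iff.2 hs))
    have a2 := mono_sign (P' i) w' y' hcon (fun u hu =>
      sign_nonneg_iff.1 (hc' u hu ▸ sign_nonneg_iff.2 hs))
    rw [← hy i hi, ← hw i hi] at a2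
    exact hid (le_antisymm a1 a2)
  · have a1 := anti_sign (P i) y w hyw.le (fun u hu =>
      sign_nonpos_iff.1 (hc u hu ▸ sign_nonpos_iff.2 hs))
    have a2 := anti_sign (P' i) w' y' hcon (fun u hu =>
      sign_nonpos_iff.1 (hc' u hu ▸ sign_nonpos_iff.2 hs))
    rw [← hy i hi, ← hw i hi] at a2
    exact hid (le_antisymm a2 a1)

lemma zeros_finite {I : Type*} (s : Finset I) (d : I → ℕ) (P : I → ℝ[X])
    (hdeg : ∀ i ∈ s, (P i).natDegree = d i) :
    {z : ℝ | ∃ i ∈ s, d i ≠ 0 ∧ (P i).eval z = 0}.Finite := by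
  have : {z : ℝ | ∃ i ∈ s, d i ≠ 0 ∧ (P i).eval z = 0} ⊆
      ⋃ i ∈ s, {z : ℝ | z ∈ (P i).roots.toFinset} := by
    rintro z ⟨i, hi, h0, hz⟩
    simp only [Set.mem_iUnion]
    refine ⟨i, hi, ?_⟩
    have hne : P i ≠ 0 := by
      intro h
      have := hdeg i hi
      rw [h] at this
      exact h0 (by simpa using this.symm)
    simpa [hne] using hz
  refine Set.Finite.subset ?_ this
  exact s.finite_toSet.biUnion (fun i _ => Finset.finite_toSet _)

lemma Good.sub {I : Type*} [DecidableEq I] {s : Finset I} {a : I} {d : I → ℕ} {P P' : I → ℝ[X]}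
    (H : Good (insert a s) d P P') (hmax : ∀ x ∈ s, d x ≤ d a) : Good s d P P' where
  deg := fun i hi => H.deg i (Finset.mem_insert_of_mem hi)
  deg' := fun i hi => H.deg' i (Finset.mem_insert_of_mem hi)
  der := fun i hi h => by
    obtain ⟨j, hj, h1, h2⟩ := H.der i (Finset.mem_insert_of_mem hi) h
    have hlt := H.der_lt (Finset.mem_insert_of_mem hi) hj h h1
    rcases Finset.mem_insert.1 hj with rfl | hj
    · exact absurd (hmax i hi) (not_le.2 hlt)
    · exact ⟨j, hj, h1, h2⟩
  const := fun i hi => H.const i (Finset.mem_insert_of_mem hi)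
  rem := fun i hi j hj h1 h2 y y' h3 h4 h5 => by
    refine H.rem i (Finset.mem_insert_of_mem hi) j (Finset.mem_insert_of_mem hj) h1 h2 y y' h3 h4 ?_
    intro k hk hkd
    rcases Finset.mem_insert.1 hk with rfl | hk
    · exact absurd (hmax j hj) (not_le.2 hkd)
    · exact h5 k hk hkd

lemma Good.step {I : Type*} [DecidableEq I] {s : Finset I} {a : I} {d : I → ℕ} {P P' : I → ℝ[X]}
    (H : Good (insert a s) d P P') (hmax : ∀ x ∈ s, d x ≤ d a)
    (hf : ∀ y, ∃ y', ∀ i ∈ s, sign ((P i).eval y) = sign ((P' i).eval y'))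
    (hb : ∀ y', ∃ y, ∀ i ∈ s, sign ((P i).eval y) = sign ((P' i).eval y')) :
    ∀ y, ∃ y', ∀ i ∈ insert a s, sign ((P i).eval y) = sign ((P' i).eval y') := by
  intro y
  have H0 := H.sub hmax
  have ha : a ∈ insert a s := Finset.mem_insert_self a s
  obtain ⟨y0, hy0⟩ := hf y
  suffices hsuff : ∃ y', (∀ i ∈ s, sign ((P i).eval y) = sign ((P' i).eval y')) ∧
      sign ((P a).eval y) = sign ((P' a).eval y') by
    obtain ⟨y', h1, h2⟩ := hsuff
    refine ⟨y', fun i hi => ?_⟩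
    rcases Finset.mem_insert.1 hi with rfl | hi
    · exact h2
    · exact h1 i hi
  by_cases h0 : d a = 0
  · exact ⟨y0, hy0, H.const a ha h0 _ _⟩
  -- signs of `P a` at zeros of smaller polynomials
  have hsgn : ∀ z ∈ {z : ℝ | ∃ i ∈ s, d i ≠ 0 ∧ (P i).eval z = 0}, ∀ z',
      (∀ i ∈ s, sign ((P i).eval z) = sign ((P' i).eval z')) →
      sign ((P a).eval z) = sign ((P' a).eval z') := by
    rintro z ⟨i, hi, hdi, hz⟩ z' hR
    have hz' : (P' i).eval z' = 0 := by
      have := hR i hi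
      rw [hz, sign_zero] at this
      exact sign_eq_zero_iff.1 this.symm
    refine H.rem a ha i (Finset.mem_insert_of_mem hi) hdi (hmax i hi) z z' hz hz' ?_
    intro k hk hkd
    rcases Finset.mem_insert.1 hk with rfl | hk
    · exact absurd (hmax i hi) (not_le.2 hkd)
    · exact hR k hk
  by_cases hy : y ∈ {z : ℝ | ∃ i ∈ s, d i ≠ 0 ∧ (P i).eval z = 0}
  · exact ⟨y0, hy0, hsgn y hy y0 hy0⟩
  have htr : ∀ z z', (∀ i ∈ s, sign ((P i).eval z) = sign ((P' i).eval z')) →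
      (z ∈ {z : ℝ | ∃ i ∈ s, d i ≠ 0 ∧ (P i).eval z = 0} ↔
       z' ∈ {z : ℝ | ∃ i ∈ s, d i ≠ 0 ∧ (P' i).eval z = 0}) := by
    intro z z' hR
    constructor
    · rintro ⟨i, hi, hdi, hz⟩
      refine ⟨i, hi, hdi, ?_⟩
      have := hR i hi
      rw [hz, sign_zero] at this
      exact sign_eq_zero_iff.1 this.symm
    · rintro ⟨i, hi, hdi, hz⟩
      refine ⟨i, hi, hdi, ?_⟩
      have := hR i hi
      rw [hz, sign_zero] at this
      exact sign_eq_zero_iff.1 this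
  obtain ⟨j, hj, hj1, hj2⟩ := H.der a ha h0
  have hjlt := H.der_lt ha hj h0 hj1
  have hjs : j ∈ s := by
    rcases Finset.mem_insert.1 hj with rfl | hj
    · exact absurd hjlt (lt_irrefl _)
    · exact hj
  have hdz : ∀ (Q : I → ℝ[X]), (∀ i ∈ insert a s, (Q i).natDegree = d i) →
      Q j = derivative (Q a) → ∀ z, (derivative (Q a)).eval z = 0 →
      z ∈ {z : ℝ | ∃ i ∈ s, d i ≠ 0 ∧ (Q i).eval z = 0} := by
    intro Q hQ hQj z hz
    refine ⟨j, hjs, ?_, by rw [hQj]; exact hz⟩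
    intro hdj
    have h1 : (derivative (Q a)).natDegree = 0 := by rw [← hQj, hQ j hj, hdj]
    have h2 := eq_C_of_natDegree_eq_zero h1
    rw [h2, eval_C] at hz
    rw [hz, C_0] at h2
    have := derivative_eq_zero.1 h2
    rw [hQ a ha] at this
    exact h0 this
  have HG : GapHyp (P a) (P' a) {z : ℝ | ∃ i ∈ s, d i ≠ 0 ∧ (P i).eval z = 0}
      {z : ℝ | ∃ i ∈ s, d i ≠ 0 ∧ (P' i).eval z = 0}
      (fun y y' => ∀ i ∈ s, sign ((P i).eval y) = sign ((P' i).eval y')) y y0 :=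
    { fin := zeros_finite s d P H0.deg
      fin' := zeros_finite s d P' H0.deg'
      dz := hdz P H.deg hj1
      dz' := hdz P' H.deg' hj2
      tot := fun z hz => by
        obtain ⟨z', hR⟩ := hf z
        exact ⟨z', (htr z z' hR).1 hz, hR⟩
      tot' := fun z' hz' => by
        obtain ⟨z, hR⟩ := hb z'
        exact ⟨z, (htr z z' hR).2 hz', hR⟩
      ord := fun z z' w w' h1 h2 h3 => by
        by_cases hne : ∃ i ∈ s, sign ((P i).eval z) ≠ sign ((P i).eval w)
        · exact Or.inl (H0.order h1 h2 h3 hne)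
        · push Not at hne
          exact Or.inr ⟨fun i hi => (hne i hi).trans (h2 i hi),
            fun i hi => (hne i hi).symm.trans (h1 i hi)⟩
      sgn := hsgn
      rel := hy0
      ny := hy
      ny0 := fun h => hy ((htr y y0 hy0).2 h)
      nR := fun z' hR h => hy ((htr y z' hR).2 h) }
  obtain ⟨y', h1, h2⟩ := gap HG (by rw [← hj1, ← hj2]; exact hy0 j hjs)
  refine ⟨y', fun i hi => ?_, h2.symm⟩
  rw [hy0 i hi]
  by_cases hdi : d i = 0
  · rw [const_eval (by rw [H0.deg' i hi]; exact hdi) y0 y']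
  · exact sign_const _ _ _ (fun t ht hz => h1 t ht ⟨i, hi, hdi, hz⟩)

lemma Good.main {I : Type*} (s : Finset I) (d : I → ℕ) (P P' : I → ℝ[X]) :
    Good s d P P' →
    (∀ y, ∃ y', ∀ i ∈ s, sign ((P i).eval y) = sign ((P' i).eval y')) ∧
    (∀ y', ∃ y, ∀ i ∈ s, sign ((P i).eval y) = sign ((P' i).eval y')) := by
  classical
  induction s using Finset.induction_on_max_value d with
  | empty => intro _; simp
  | insert a s has hmax ih =>
    intro H
    obtain ⟨hf, hb⟩ := ih (H.sub hmax)
    refine ⟨H.step hmax hf hb, ?_⟩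
    intro y'
    obtain ⟨y, hy⟩ := H.symm.step hmax (fun y' => by
      obtain ⟨y, hy⟩ := hb y'
      exact ⟨y, fun i hi => (hy i hi).symm⟩) (fun y => by
      obtain ⟨y', hy'⟩ := hf y
      exact ⟨y', fun i hi => (hy' i hi).symm⟩) y'
    exact ⟨y, fun i hi => (hy i hi).symm⟩


lemma exists_closed {T : Type*} [DecidableEq T] (deg : T → ℕ) (op : T → T → Finset T)
    (hop : ∀ p q, ∀ r ∈ op p q, deg r < deg p ∧ deg r < deg q) (F : Finset T) :
    ∃ F' : Finset T, F ⊆ F' ∧ ∀ p ∈ F', ∀ q ∈ F', op p q ⊆ F' := by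
  obtain ⟨D, hD⟩ : ∃ D, ∀ p ∈ F, deg p ≤ D :=
    ⟨F.sup deg, fun p hp => Finset.le_sup hp⟩
  have key : ∀ k : ℕ, ∃ F' : Finset T, F ⊆ F' ∧
      ∀ p ∈ F', ∀ q ∈ F', D < deg p + k → D < deg q + k → op p q ⊆ F' := by
    intro k
    induction k with
    | zero =>
      exact ⟨F, subset_rfl, fun p hp q _ h => absurd (hD p hp) (by omega)⟩
    | succ k ih =>
      obtain ⟨F', h1, h2⟩ := ih
      refine ⟨F' ∪ F'.biUnion (fun p => F'.biUnion (fun q => op p q)),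
        h1.trans Finset.subset_union_left, ?_⟩
      have hin : ∀ r ∈ F' ∪ F'.biUnion (fun p => F'.biUnion (fun q => op p q)),
          D < deg r + (k + 1) → r ∈ F' := by
        intro r hr hd
        rcases Finset.mem_union.1 hr with hr | hr
        · exact hr
        · obtain ⟨p, hp, hr⟩ := Finset.mem_biUnion.1 hr
          obtain ⟨q, hq, hr⟩ := Finset.mem_biUnion.1 hr
          have := hop p q r hr
          exact h2 p hp q hq (by omega) (by omega) hr
      intro p hp q hq hdp hdq r hr
      exact Finset.mem_union_right _ (Finset.mem_biUnion.2 ⟨p, hin p hp hdp,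
        Finset.mem_biUnion.2 ⟨q, hin q hq hdq, hr⟩⟩)
  obtain ⟨F', h1, h2⟩ := key (D + 1)
  exact ⟨F', h1, fun p hp q hq => h2 p hp q hq (by omega) (by omega)⟩

lemma pseudo_rem {R : Type*} [CommRing R] (q : R[X]) (hq : q.natDegree ≠ 0) (n : ℕ) :
    ∀ p : R[X], p.natDegree ≤ n → ∃ (k : ℕ) (s r : R[X]),
      C (q.leadingCoeff) ^ k * p = q * s + r ∧ r.natDegree < q.natDegree := by
  induction n with
  | zero =>
    intro p hp
    exact ⟨0, 0, p, by simp, by omega⟩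
  | succ n ih =>
    intro p hp
    by_cases hlt : p.natDegree < q.natDegree
    · exact ⟨0, 0, p, by simp, hlt⟩
    push Not at hlt
    set m := p.natDegree - q.natDegree with hm
    have hdeg : (C q.leadingCoeff * p - q * (C p.leadingCoeff * X ^ m)).natDegree ≤ n := by
      have h1 : (C q.leadingCoeff * p - q * (C p.leadingCoeff * X ^ m)).natDegree
          ≤ p.natDegree := by
        refine (natDegree_sub_le _ _).trans (max_le (natDegree_C_mul_le _ _) ?_)
        refine natDegree_mul_le.trans ?_
        have := natDegree_C_mul_X_pow_le p.leadingCoeff m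
        omega
      have h2 : (C q.leadingCoeff * p - q * (C p.leadingCoeff * X ^ m)).coeff p.natDegree = 0 := by
        rw [coeff_sub, coeff_C_mul, ← mul_assoc, coeff_mul_X_pow', if_pos (by omega),
          coeff_mul_C, show p.natDegree - m = q.natDegree by omega]
        rw [coeff_natDegree, coeff_natDegree, mul_comm, sub_self]
      by_contra hcon
      push Not at hcon
      have h3 : (C q.leadingCoeff * p - q * (C p.leadingCoeff * X ^ m)).natDegree = p.natDegree := by
        omega
      rw [← h3] at h2
      have h4 := leadingCoeff_eq_zero.1 h2
      rw [h4] at hcon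
      simp at hcon
    obtain ⟨k, s, r, h1, h2⟩ := ih _ hdeg
    refine ⟨k + 1, s + C q.leadingCoeff ^ k * (C p.leadingCoeff * X ^ m), r, ?_, h2⟩
    rw [mul_sub] at h1
    linear_combination h1

open Classical in
noncomputable def prem {R : Type*} [CommRing R] (p q : R[X]) : R[X] :=
  if hq : q.natDegree ≠ 0 then (pseudo_rem q hq p.natDegree p le_rfl).choose_spec.choose_spec.choose
  else 0

lemma prem_spec {R : Type*} [CommRing R] (p q : R[X]) (hq : q.natDegree ≠ 0) :
    (∃ (k : ℕ) (s : R[X]), C (q.leadingCoeff) ^ k * p = q * s + prem p q) ∧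
      (prem p q).natDegree < q.natDegree := by
  rw [prem, dif_pos hq]
  have := (pseudo_rem q hq p.natDegree p le_rfl).choose_spec.choose_spec.choose_spec
  exact ⟨⟨_, _, this.1⟩, this.2⟩

open Classical in
noncomputable def op {R : Type*} [CommRing R] (p q : R[X]) : Finset R[X] :=
  if q.natDegree ≠ 0 ∧ q.natDegree ≤ p.natDegree then
    insert (prem p q) (if p = q then {derivative p, p.eraseLead} else ∅) else ∅

lemma eraseLead_lt {R : Type*} [CommRing R] (p : R[X]) (hp : p.natDegree ≠ 0) :
    p.eraseLead.natDegree < p.natDegree := by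
  have := eraseLead_natDegree_le p
  omega

lemma op_lt {R : Type*} [CommRing R] (p q : R[X]) : ∀ r ∈ op p q,
    r.natDegree < p.natDegree ∧ r.natDegree < q.natDegree := by
  classical
  intro r hr
  unfold op at hr
  split_ifs at hr with h1 h2
  · subst h2
    simp only [Finset.mem_insert, Finset.mem_singleton] at hr
    rcases hr with rfl | rfl | rfl
    · exact ⟨(prem_spec p p h1.1).2, (prem_spec p p h1.1).2⟩
    · exact ⟨natDegree_derivative_lt h1.1, natDegree_derivative_lt h1.1⟩
    · exact ⟨eraseLead_lt p h1.1, eraseLead_lt p h1.1⟩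
  · simp only [Finset.mem_insert, Finset.notMem_empty, or_false] at hr
    subst hr
    have := (prem_spec p q h1.1).2
    exact ⟨this.trans_le h1.2, this⟩
  · simp at hr

lemma elim_one {R : Type*} [CommRing R] (F : Finset R[X]) :
    ∃ G : Finset R, ∀ e e' : R →+* ℝ, (∀ g ∈ G, sign (e g) = sign (e' g)) →
      ∀ y, ∃ y', ∀ p ∈ F, sign ((p.map e).eval y) = sign ((p.map e').eval y') := by
  classical
  obtain ⟨F', hFF', hcl⟩ := exists_closed natDegree op op_lt F
  refine ⟨F'.image leadingCoeff, ?_⟩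
  intro e e' hG
  have hlc : ∀ p ∈ F', sign (e p.leadingCoeff) = sign (e' p.leadingCoeff) := fun p hp =>
    hG _ (Finset.mem_image_of_mem _ hp)
  have hlc0 : ∀ p ∈ F', (e p.leadingCoeff = 0 ↔ e' p.leadingCoeff = 0) := fun p hp => by
    rw [← sign_eq_zero_iff, hlc p hp, sign_eq_zero_iff]
  have hder : ∀ p ∈ F', p.natDegree ≠ 0 → derivative p ∈ F' := fun p hp h0 => by
    apply hcl p hp p hp
    simp [op, h0]
  have hera : ∀ p ∈ F', p.natDegree ≠ 0 → p.eraseLead ∈ F' := fun p hp h0 => by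
    apply hcl p hp p hp
    simp [op, h0]
  have hprem : ∀ p ∈ F', ∀ q ∈ F', q.natDegree ≠ 0 → q.natDegree ≤ p.natDegree →
      prem p q ∈ F' := fun p hp q hq h0 h1 => by
    apply hcl p hp q hq
    rw [op, if_pos ⟨h0, h1⟩]
    exact Finset.mem_insert_self _ _
  have heval0 : ∀ (e : R →+* ℝ) (p : R[X]) (y : ℝ), e p.leadingCoeff = 0 →
      (p.map e).eval y = (p.eraseLead.map e).eval y := by
    intro e p y h
    have h1 := congrArg (fun u => (u.map e).eval y) (eraseLead_add_C_mul_X_pow p)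
    simp only [Polynomial.map_add, Polynomial.map_mul, map_C, h, eval_add, C_0, zero_mul,
      eval_zero, add_zero] at h1
    exact h1.symm
  set s := F'.filter (fun p => e p.leadingCoeff ≠ 0) with hs
  have htrunc : ∀ (y y' : ℝ) (D : ℕ),
      (∀ k ∈ s, k.natDegree < D → sign ((k.map e).eval y) = sign ((k.map e').eval y')) →
      ∀ n, ∀ p ∈ F', p.natDegree ≤ n → p.natDegree < D →
        sign ((p.map e).eval y) = sign ((p.map e').eval y') := by
    intro y y' D hk n
    induction n with
    | zero =>
      intro p hp hn _
      have h := eq_C_of_natDegree_eq_zero (Nat.le_zero.1 hn)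
      have h1 := hlc p hp
      rw [h] at h1 ⊢
      simpa using h1
    | succ n ih =>
      intro p hp hn hD
      by_cases h0 : p.natDegree = 0
      · have h := eq_C_of_natDegree_eq_zero h0
        have h1 := hlc p hp
        rw [h] at h1 ⊢
        simpa using h1
      by_cases hl : e p.leadingCoeff = 0
      · rw [heval0 e p y hl, heval0 e' p y' ((hlc0 p hp).1 hl)]
        have := eraseLead_lt p h0
        exact ih _ (hera p hp h0) (by omega) (by omega)
      · exact hk p (Finset.mem_filter.2 ⟨hp, hl⟩) hD
  have hgood : Good s natDegree (fun p => p.map e) (fun p => p.map e') :=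
    { deg := fun p hp => natDegree_map_of_leadingCoeff_ne_zero e (Finset.mem_filter.1 hp).2
      deg' := fun p hp => natDegree_map_of_leadingCoeff_ne_zero e' (by
        have := Finset.mem_filter.1 hp
        exact fun h => this.2 ((hlc0 p this.1).2 h))
      der := fun p hp h0 => by
        obtain ⟨hp, hl⟩ := Finset.mem_filter.1 hp
        refine ⟨derivative p, Finset.mem_filter.2 ⟨hder p hp h0, ?_⟩,
          (derivative_map p e).symm, (derivative_map p e').symm⟩
        have h1 : e ((derivative p).coeff (p.natDegree - 1)) ≠ 0 := by
          rw [coeff_derivative, Nat.sub_add_cancel (Nat.pos_of_ne_zero h0), map_mul]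
          refine mul_ne_zero hl ?_
          have : ((p.natDegree - 1 : ℕ) : R) + 1 = ((p.natDegree : ℕ) : R) := by
            exact_mod_cast congrArg (Nat.cast (R := R)) (Nat.sub_add_cancel (Nat.pos_of_ne_zero h0))
          rw [this, map_natCast]
          exact_mod_cast h0
        have h2 : (derivative p).natDegree = p.natDegree - 1 := by
          apply le_antisymm (natDegree_derivative_le p)
          apply le_natDegree_of_ne_zero
          intro h
          rw [h, map_zero] at h1
          exact h1 rfl
        rw [leadingCoeff, h2]
        exact h1
      const := fun p hp h0 y y' => by
        obtain ⟨hp, hl⟩ := Finset.mem_filter.1 hp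
        have h := eq_C_of_natDegree_eq_zero h0
        have h1 := hlc p hp
        rw [h] at h1 ⊢
        simpa using h1
      rem := fun p hp q hq h0 hle y y' hy hy' hk => by
        obtain ⟨hp, hpl⟩ := Finset.mem_filter.1 hp
        obtain ⟨hq, hql⟩ := Finset.mem_filter.1 hq
        obtain ⟨⟨k, t, h1⟩, h2⟩ := prem_spec p q h0
        have hr := htrunc y y' q.natDegree hk _ (prem p q) (hprem p hp q hq h0 hle) le_rfl h2
        have e1 := congrArg (fun u => (u.map e).eval y) h1
        have e2 := congrArg (fun u => (u.map e').eval y') h1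
        simp only [Polynomial.map_mul, Polynomial.map_add, Polynomial.map_pow, map_C, eval_mul,
          eval_add, eval_pow, eval_C] at e1 e2
        rw [hy, zero_mul, zero_add] at e1
        rw [hy', zero_mul, zero_add] at e2
        rw [← e1, ← e2, sign_mul, sign_mul, sign_pow, sign_pow, ← hlc q hq] at hr
        have hne : sign (e q.leadingCoeff) ^ k ≠ 0 := by
          rw [← sign_pow, Ne, sign_eq_zero_iff]
          exact pow_ne_zero _ hql
        exact mul_left_cancel₀ hne hr }
  intro y
  obtain ⟨y', hy'⟩ := (Good.main s _ _ _ hgood).1 y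
  refine ⟨y', fun p hp => ?_⟩
  exact htrunc y y' (p.natDegree + 1) (fun k hk _ => hy' k hk) _ p (hFF' hp) le_rfl
    (Nat.lt_succ_self _)

lemma elim_many {A : Type*} [CommRing A] (n : ℕ) : ∀ F : Finset (MvPolynomial (Fin n) A),
    ∃ G : Finset A, ∀ e e' : A →+* ℝ, (∀ g ∈ G, sign (e g) = sign (e' g)) →
      ∀ x : Fin n → ℝ, ∃ x' : Fin n → ℝ, ∀ p ∈ F,
        sign (MvPolynomial.eval₂ e x p) = sign (MvPolynomial.eval₂ e' x' p) := by
  classical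
  induction n with
  | zero =>
    intro F
    refine ⟨F.image (fun p => p.coeff 0), ?_⟩
    intro e e' hG x
    refine ⟨x, fun p hp => ?_⟩
    have h := hG _ (Finset.mem_image_of_mem _ hp)
    rw [MvPolynomial.eq_C_of_isEmpty p]
    simpa using h
  | succ n ih =>
    intro F
    obtain ⟨G1, hG1⟩ := elim_one (F.image (MvPolynomial.finSuccEquiv A n))
    obtain ⟨G, hG⟩ := ih G1
    refine ⟨G, ?_⟩
    intro e e' he x
    obtain ⟨x0, hx0⟩ := hG e e' he (Fin.tail x)
    obtain ⟨y, hy⟩ := hG1 (MvPolynomial.eval₂Hom e (Fin.tail x)) (MvPolynomial.eval₂Hom e' x0)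
      hx0 (x 0)
    have hev : ∀ (e : A →+* ℝ) (y : ℝ) (z : Fin n → ℝ) (p : MvPolynomial (Fin (n+1)) A),
        ((MvPolynomial.finSuccEquiv A n p).map (MvPolynomial.eval₂Hom e z)).eval y =
          MvPolynomial.eval₂ e (Fin.cons y z : Fin (n+1) → ℝ) p := by
      intro e y z p
      induction p using MvPolynomial.induction_on with
      | C a => simp [MvPolynomial.finSuccEquiv_apply]
      | add p q hp hq => simp [hp, hq]
      | mul_X p i hp =>
        rw [map_mul, Polynomial.map_mul, eval_mul, hp, MvPolynomial.eval₂_mul]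
        congr 1
        refine Fin.cases ?_ (fun i => ?_) i
        · simp [MvPolynomial.finSuccEquiv_X_zero]
        · simp [MvPolynomial.finSuccEquiv_X_succ]
    refine ⟨Fin.cons y x0, fun p hp => ?_⟩
    have := hy _ (Finset.mem_image_of_mem _ hp)
    rw [hev, hev, Fin.cons_self_tail] at this
    exact this


lemma frontier_finite (A : Set ℝ) (G : Finset ℝ[X])
    (hA : ∀ t t', (∀ g ∈ G, sign (g.eval t) = sign (g.eval t')) → t ∈ A → t' ∈ A) :
    (frontier A).Finite := by
  classical
  set Z : Set ℝ := ⋃ g ∈ G, {z : ℝ | z ∈ g.roots.toFinset} with hZ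
  have hZf : Z.Finite := G.finite_toSet.biUnion (fun i _ => Finset.finite_toSet _)
  refine hZf.subset ?_
  intro t ht
  by_contra htZ
  have hnhds : Zᶜ ∈ nhds t := hZf.isClosed.isOpen_compl.mem_nhds htZ
  obtain ⟨ε, hε, hball⟩ := Metric.mem_nhds_iff.1 hnhds
  have hsame : ∀ a ∈ Metric.ball t ε, ∀ b ∈ Metric.ball t ε, a ∈ A → b ∈ A := by
    intro a ha b hb
    refine hA a b (fun g hg => ?_)
    by_cases hg0 : g = 0
    · simp [hg0]
    refine sign_const g a b (fun u hu h0 => ?_)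
    have hub : u ∈ Metric.ball t ε := by
      have hc : Set.OrdConnected (Metric.ball t ε) := by
        rw [Real.ball_eq_Ioo]; exact Set.ordConnected_Ioo
      exact hc.uIcc_subset ha hb hu
    refine hball hub ?_
    simp only [hZ, Set.mem_iUnion]
    exact ⟨g, hg, by simpa [hg0] using h0⟩
  have htb := Metric.mem_ball_self (x := t) hε
  rw [frontier_eq_closure_inter_closure] at ht
  obtain ⟨a, ha, haA⟩ := mem_closure_iff_nhds.1 ht.1 _ (Metric.ball_mem_nhds t hε)
  obtain ⟨b, hb, hbA⟩ := mem_closure_iff_nhds.1 ht.2 _ (Metric.ball_mem_nhds t hε)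
  exact hbA (hsame a ha b hb haA)

lemma compact_decomp (K : Set ℝ) (hK : IsCompact K) (hf : (frontier K).Finite) :
    ∀ t ∈ K, ∃ a ∈ frontier K, ∃ b ∈ frontier K, a ≤ t ∧ t ≤ b ∧ Set.Icc a b ⊆ K := by
  intro t ht
  have hcl := hK.isClosed
  have hfK : frontier K ⊆ K := hcl.frontier_subset
  have hcross : ∀ (J : Set ℝ), IsPreconnected J → t ∈ J → (∃ c ∈ J, c ∉ K) →
      ∃ z ∈ J, z ∈ frontier K := by
    rintro J hJ htJ ⟨c, hc, hcK⟩
    by_contra hcon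
    push Not at hcon
    have hint : ∀ z ∈ J, z ∈ K → z ∈ interior K := by
      intro z hz hzK
      by_contra hzi
      exact hcon z hz ⟨subset_closure hzK, hzi⟩
    obtain ⟨z, -, hz1, hz2⟩ := hJ (interior K) Kᶜ isOpen_interior hcl.isOpen_compl
      (fun z hz => by
        by_cases hzK : z ∈ K
        · exact Or.inl (hint z hz hzK)
        · exact Or.inr hzK) ⟨t, htJ, hint t htJ ht⟩ ⟨c, hc, hcK⟩
    exact hz2 (interior_subset hz1)
  obtain ⟨l, hl⟩ := hK.bddBelow
  obtain ⟨u, hu⟩ := hK.bddAbove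
  have hL : (frontier K ∩ Set.Iic t).Nonempty := by
    obtain ⟨z, h1, h2⟩ := hcross (Set.Iic t) isPreconnected_Iic (Set.mem_Iic.2 le_rfl)
      ⟨l - 1, by have := hl ht; exact Set.mem_Iic.2 (by linarith), fun h => by
        have := hl h; linarith⟩
    exact ⟨z, h2, h1⟩
  have hU : (frontier K ∩ Set.Ici t).Nonempty := by
    obtain ⟨z, h1, h2⟩ := hcross (Set.Ici t) isPreconnected_Ici (Set.mem_Ici.2 le_rfl)
      ⟨u + 1, by have := hu ht; exact Set.mem_Ici.2 (by linarith), fun h => by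
        have := hu h; linarith⟩
    exact ⟨z, h2, h1⟩
  obtain ⟨a, ha, hamax⟩ := Set.exists_max_image _ id (hf.inter_of_left _) hL
  obtain ⟨b, hb, hbmin⟩ := Set.exists_min_image _ id (hf.inter_of_left _) hU
  refine ⟨a, ha.1, b, hb.1, ha.2, hb.2, ?_⟩
  intro c hc
  by_contra hcK
  rcases le_total c t with h | h
  · obtain ⟨z, h1, h2⟩ := hcross (Set.Icc c t) isPreconnected_Icc ⟨h, le_rfl⟩
      ⟨c, ⟨le_rfl, h⟩, hcK⟩
    have h3 : z ≤ a := hamax z ⟨h2, h1.2⟩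
    have h4 : c = a := le_antisymm (h1.1.trans h3) hc.1
    exact hcK (h4 ▸ hfK ha.1)
  · obtain ⟨z, h1, h2⟩ := hcross (Set.Icc t c) isPreconnected_Icc ⟨le_rfl, h⟩
      ⟨c, ⟨h, le_rfl⟩, hcK⟩
    have h3 : b ≤ z := hbmin z ⟨h2, h1.1⟩
    have h4 : c = b := le_antisymm hc.2 (h3.trans h1.2)
    exact hcK (h4 ▸ hfK hb.1)

lemma simple_one : HasOnlySimpleComplexRoots (1 : ℝ[X]) := by
  refine ⟨one_ne_zero, fun a => ?_⟩
  rw [Polynomial.map_one, rootMultiplicity_eq_zero (by simp)]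
  exact zero_le_one

lemma simple_quad (a b : ℝ) (h : a ≠ b) :
    HasOnlySimpleComplexRoots ((X - C a) * (C b - X) : ℝ[X]) := by
  have h1 : (X - C a : ℝ[X]) ≠ 0 := X_sub_C_ne_zero a
  have h2 : (C b - X : ℝ[X]) ≠ 0 := by
    rw [← neg_sub]; exact neg_ne_zero.2 (X_sub_C_ne_zero b)
  refine ⟨mul_ne_zero h1 h2, fun z => ?_⟩
  have hsep : (((X - C a) * (C b - X) : ℝ[X]).map (algebraMap ℝ ℂ)).Separable := by
    apply Polynomial.Separable.map
    have h3 : (X - C a : ℝ[X]).Separable := separable_X_sub_C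
    have h4 : (C b - X : ℝ[X]).Separable := by
      have : (C b - X : ℝ[X]) = C (-1) * (X - C b) := by simp
      rw [this]
      exact separable_X_sub_C.unit_mul (Polynomial.isUnit_C.2 (by norm_num))
    refine h3.mul h4 ?_
    have := isCoprime_X_sub_C_of_isUnit_sub (R := ℝ) (a := a) (b := b)
      (isUnit_iff_ne_zero.2 (sub_ne_zero.2 h))
    rw [← neg_sub X (C b)]
    exact this.neg_right
  exact rootMultiplicity_le_one_of_separable hsep z

noncomputable def pp (ab : ℝ × ℝ) : ℝ[X] :=
  if ab.1 = ab.2 then 1 else (X - C ab.1) * (C ab.2 - X)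

noncomputable def qq (ab : ℝ × ℝ) : ℝ[X] :=
  if ab.1 = ab.2 then X - C ab.1 else 0

lemma pp_qq (ab : ℝ × ℝ) (h : ab.1 ≤ ab.2) (t : ℝ) :
    (0 ≤ (pp ab).eval t ∧ (qq ab).eval t = 0) ↔ t ∈ Set.Icc ab.1 ab.2 := by
  unfold pp qq
  split_ifs with h1
  · rw [← h1]
    simp [sub_eq_zero]
  · simp only [eval_mul, eval_sub, eval_X, eval_C, eval_zero, and_true, Set.mem_Icc]
    constructor
    · intro h2
      constructor
      · by_contra hc
        push Not at hc
        nlinarith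
      · by_contra hc
        push Not at hc
        nlinarith
    · rintro ⟨h2, h3⟩
      exact mul_nonneg (by linarith) (by linarith)

lemma image_determined (n N : ℕ) (f : MvPolynomial (Fin n) ℝ)
    (mP lQ : Fin N → ℕ)
    (P : (u : Fin N) → Fin (mP u) → MvPolynomial (Fin n) ℝ)
    (Qp : (u : Fin N) → Fin (lQ u) → MvPolynomial (Fin n) ℝ) :
    ∃ G : Finset ℝ[X], ∀ t t' : ℝ, (∀ g ∈ G, sign (g.eval t) = sign (g.eval t')) →
      t ∈ ((fun x => MvPolynomial.eval x f) '' (⋃ u, {x | (∀ i, 0 < MvPolynomial.eval x (P u i)) ∧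
        ∀ k, MvPolynomial.eval x (Qp u k) = 0})) →
      t' ∈ ((fun x => MvPolynomial.eval x f) '' (⋃ u, {x | (∀ i, 0 < MvPolynomial.eval x (P u i)) ∧
        ∀ k, MvPolynomial.eval x (Qp u k) = 0})) := by
  classical
  let L : MvPolynomial (Fin n) ℝ → MvPolynomial (Fin n) ℝ[X] := MvPolynomial.map C
  let F : Finset (MvPolynomial (Fin n) ℝ[X]) :=
    insert (L f - MvPolynomial.C X)
      ((Finset.univ.image (fun s : (u : Fin N) × Fin (mP u) => L (P s.1 s.2))) ∪
       (Finset.univ.image (fun s : (u : Fin N) × Fin (lQ u) => L (Qp s.1 s.2))))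
  obtain ⟨G, hG⟩ := elim_many n F
  refine ⟨G, ?_⟩
  rintro t t' htt' ⟨x, hx, hxt⟩
  obtain ⟨x', hx'⟩ := hG (evalRingHom t) (evalRingHom t') htt' x
  have hL : ∀ (t : ℝ) (x : Fin n → ℝ) (p : MvPolynomial (Fin n) ℝ),
      MvPolynomial.eval₂ (evalRingHom t) x (L p) = MvPolynomial.eval x p := by
    intro t x p
    simp only [L]
    rw [MvPolynomial.eval₂_map, MvPolynomial.eval, MvPolynomial.coe_eval₂Hom]
    congr 1
    ext r
    simp
  obtain ⟨u, hu⟩ := Set.mem_iUnion.1 hx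
  refine ⟨x', Set.mem_iUnion.2 ⟨u, ?_, ?_⟩, ?_⟩
  · intro i
    have h1 := hx' (L (P u i)) (Finset.mem_insert_of_mem (Finset.mem_union_left _
      (Finset.mem_image.2 ⟨⟨u, i⟩, Finset.mem_univ _, rfl⟩)))
    rw [hL, hL, sign_pos (hu.1 i)] at h1
    exact sign_eq_one_iff.1 h1.symm
  · intro k
    have h1 := hx' (L (Qp u k)) (Finset.mem_insert_of_mem (Finset.mem_union_right _
      (Finset.mem_image.2 ⟨⟨u, k⟩, Finset.mem_univ _, rfl⟩)))
    rw [hL, hL, hu.2 k, sign_zero] at h1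
    exact sign_eq_zero_iff.1 h1.symm
  · have h1 := hx' (L f - MvPolynomial.C X) (Finset.mem_insert_self _ _)
    rw [MvPolynomial.eval₂_sub, MvPolynomial.eval₂_sub, hL, hL, MvPolynomial.eval₂_C,
      MvPolynomial.eval₂_C] at h1
    simp only [coe_evalRingHom, eval_X] at h1
    dsimp only at hxt
    rw [hxt, sub_self, sign_zero] at h1
    exact sub_eq_zero.1 (sign_eq_zero_iff.1 h1.symm)

end TSeid

/-- For a polynomial `f` on `ℝⁿ` and a semi-algebraic set `S ⊆ ℝⁿ`
with `f(S)` nonempty and bounded, there is a finite union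
`Q = ⋃_j {t : p_{i,j}(t) ≥ 0 ∀ i, q_{k,j}(t) = 0 ∀ k}` equal to the closure of
`f(S)`, with each `p_{i,j}` squarefree and pairwise without common complex roots, and
`f⋆ = inf f(S)` is the least element of `Q`. -/
theorem attained_minimum_on_closure
    (n N : ℕ) (f : MvPolynomial (Fin n) ℝ)
    (mP lQ : Fin N → ℕ)
    (P : (u : Fin N) → Fin (mP u) → MvPolynomial (Fin n) ℝ)
    (Qp : (u : Fin N) → Fin (lQ u) → MvPolynomial (Fin n) ℝ)
    (S : Set (Fin n → ℝ))
    (hS : S = ⋃ u, {x | (∀ i, 0 < MvPolynomial.eval x (P u i)) ∧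
        ∀ k, MvPolynomial.eval x (Qp u k) = 0})
    (hne : ((fun x => MvPolynomial.eval x f) '' S).Nonempty)
    (hbd : Bornology.IsBounded ((fun x => MvPolynomial.eval x f) '' S)) :
    ∃ (w : ℕ) (v kk : Fin w → ℕ)
      (p : (j : Fin w) → Fin (v j) → Polynomial ℝ)
      (q : (j : Fin w) → Fin (kk j) → Polynomial ℝ),
      ((⋃ j, {t : ℝ | (∀ i, 0 ≤ (p j i).eval t) ∧ ∀ k, (q j k).eval t = 0})
        = closure ((fun x => MvPolynomial.eval x f) '' S)) ∧
      (∀ j i, HasOnlySimpleComplexRoots (p j i)) ∧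
      (∀ j, ∀ i i', i ≠ i' → ¬ HasCommonComplexRoot (p j i) (p j i')) ∧
      IsLeast (⋃ j, {t : ℝ | (∀ i, 0 ≤ (p j i).eval t) ∧ ∀ k, (q j k).eval t = 0})
        (sInf ((fun x => MvPolynomial.eval x f) '' S)) := by
  classical
  set A := (fun x => MvPolynomial.eval x f) '' S with hAdef
  have hleast : IsLeast (closure A) (sInf A) := by
    refine ⟨csInf_mem_closure hne hbd.bddBelow, ?_⟩
    intro t ht
    have hsub : closure A ⊆ Set.Ici (sInf A) :=
      closure_minimal (fun a ha => csInf_le hbd.bddBelow ha) isClosed_Ici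
    exact hsub ht
  obtain ⟨G, hG⟩ := TSeid.image_determined n N f mP lQ P Qp
  rw [← hS] at hG
  have hfin : (frontier (closure A)).Finite :=
    (TSeid.frontier_finite A G hG).subset frontier_closure_subset
  have hK : IsCompact (closure A) := hbd.isCompact_closure
  have hdec := TSeid.compact_decomp (closure A) hK hfin
  let W : Finset ℝ := hfin.toFinset
  let I : Finset (ℝ × ℝ) := (W ×ˢ W).filter
    (fun ab => ab.1 ≤ ab.2 ∧ Set.Icc ab.1 ab.2 ⊆ closure A)
  let φ : Fin I.card → ℝ × ℝ := fun j => (I.equivFin.symm j : ℝ × ℝ)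
  have hφ : ∀ j, (φ j).1 ≤ (φ j).2 ∧ Set.Icc (φ j).1 (φ j).2 ⊆ closure A := fun j =>
    (Finset.mem_filter.1 (I.equivFin.symm j).2).2
  have hQ : (⋃ j : Fin I.card, {t : ℝ | (∀ i : Fin 1, 0 ≤ (TSeid.pp (φ j)).eval t) ∧
      ∀ k : Fin 1, (TSeid.qq (φ j)).eval t = 0}) = closure A := by
    ext t
    simp only [Set.mem_iUnion, Set.mem_ofPred_eq, forall_const]
    constructor
    · rintro ⟨j, hj⟩
      exact (hφ j).2 ((TSeid.pp_qq _ (hφ j).1 t).1 hj)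
    · intro ht
      obtain ⟨a, ha, b, hb, h1, h2, h3⟩ := hdec t ht
      have hmem : (a, b) ∈ I := Finset.mem_filter.2
        ⟨Finset.mem_product.2 ⟨hfin.mem_toFinset.2 ha, hfin.mem_toFinset.2 hb⟩,
          h1.trans h2, h3⟩
      refine ⟨I.equivFin ⟨(a, b), hmem⟩, ?_⟩
      rw [TSeid.pp_qq _ (hφ _).1]
      simp only [φ, Equiv.symm_apply_apply]
      exact ⟨h1, h2⟩
  refine ⟨I.card, fun _ => 1, fun _ => 1, fun j _ => TSeid.pp (φ j), fun j _ => TSeid.qq (φ j),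
    hQ, ?_, ?_, ?_⟩
  · intro j _
    show HasOnlySimpleComplexRoots (TSeid.pp (φ j))
    unfold TSeid.pp
    split_ifs with h
    · exact TSeid.simple_one
    · exact TSeid.simple_quad _ _ h
  · intro j i i' h
    exact absurd (Subsingleton.elim i i') h
  · rw [hQ]
    exact hleast
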